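/- Let r ≥ 3 and n ≥ (r-1)(2r+1)/2, and let H be an n-vertex T_r-free r-graph with δ⁺_{r-1}(H) > 2n/(2r+1). Then for every vertex v of H that lies in at least one edge, the neighborhood of v satisfies |N_H(v)| > 2(r-1)n/(2r+1). -/

import Mathlib

variable {V : Type*} [Fintype V] [DecidableEq V]

/-- The (r-1)-shadow of an r-graph: all (r-1)-sets contained in some edge. -/
def sshadow (r : ℕ) (H : Finset (Finset V)) : Finset (Finset V) :=
  Finset.univ.filter (fun e => e.card = r - 1 ∧ ∃ E ∈ H, e ⊆ E)

/-- The codegree neighborhood of a set `e`: vertices `v` with `e ∪ {v} ∈ H`. -/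
def nbhd (H : Finset (Finset V)) (e : Finset V) : Finset V :=
  Finset.univ.filter (fun v => insert v e ∈ H)

/-- The neighborhood of a vertex. -/
def vnbhd (H : Finset (Finset V)) (v : V) : Finset V :=
  Finset.univ.filter (fun u => u ≠ v ∧ ∃ E ∈ H, u ∈ E ∧ v ∈ E)

/-- `H` is T_r-free. -/
def IsTrFree (r : ℕ) (H : Finset (Finset V)) : Prop :=
  ¬ ∃ (S W : Finset V) (a b : V),
      S.card = r - 1 ∧ W.card = r - 2 ∧ a ≠ b ∧
      a ∉ S ∧ b ∉ S ∧ a ∉ W ∧ b ∉ W ∧ Disjoint S W ∧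
      insert a S ∈ H ∧ insert b S ∈ H ∧ insert a (insert b W) ∈ H

/-- A set of vertices is independent. -/
def IsIndep (H : Finset (Finset V)) (I : Finset V) : Prop :=
  ∀ E ∈ H, (E ∩ I).card ≤ 1

/-- `H` is r-partite. -/
def IsRPartite (r : ℕ) (H : Finset (Finset V)) : Prop :=
  ∃ P : Fin r → Finset V, (∀ v : V, ∃! i, v ∈ P i) ∧ ∀ i, IsIndep H (P i)

/-- Minimum positive codegree. -/
noncomputable def minPosCodeg (r : ℕ) (H : Finset (Finset V)) : ℕ :=
  sInf {k | ∃ e ∈ sshadow r H, (nbhd H e).card = k}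

/-!
The bound on `n` makes every positive codegree exceed `r - 1`. Hence an edge containing two vertices
`a`, `b` of `N(e)` can be moved off `e` while keeping `a` and `b`; together with `e ∪ {a}` and
`e ∪ {b}` it then forms a `T_r`. So every `N(e)` is independent. For an edge `E`, a common neighbor
`w` of `E \ {a}` and `E \ {b}` would put `w` and `b`, both in `N(E \ {b})`, into the edge
`(E \ {a}) ∪ {w}`; so the neighborhoods of the `(r-1)`-subsets of `E` are pairwise disjoint. Those
of the `r - 1` subsets containing a vertex `v` all lie in `N(v)`, and each has more than
`2n/(2r+1)` elements.
-/

section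

open Finset

variable {r : ℕ} {H : Finset (Finset V)} {e E : Finset V} {a b v : V}

theorem mem_sshadow : e ∈ sshadow r H ↔ #e = r - 1 ∧ ∃ E ∈ H, e ⊆ E := by
  simp [sshadow]

theorem mem_nbhd : v ∈ nbhd H e ↔ insert v e ∈ H := by
  simp [nbhd]

theorem mem_vnbhd : a ∈ vnbhd H v ↔ a ≠ v ∧ ∃ E ∈ H, a ∈ E ∧ v ∈ E := by
  simp [vnbhd]

theorem self_mem_nbhd_erase (hE : E ∈ H) (ha : a ∈ E) : a ∈ nbhd H (E.erase a) := by
  rwa [mem_nbhd, insert_erase ha]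

omit [Fintype V] in
theorem card_erase_of_mem_edge (hH : ∀ E ∈ H, #E = r) (hE : E ∈ H) (ha : a ∈ E) :
    #(E.erase a) = r - 1 := by
  rw [card_erase_of_mem ha, hH E hE]

theorem erase_mem_sshadow (hH : ∀ E ∈ H, #E = r) (hE : E ∈ H) (ha : a ∈ E) :
    E.erase a ∈ sshadow r H :=
  mem_sshadow.2 ⟨card_erase_of_mem_edge hH hE ha, E, hE, erase_subset a E⟩

theorem notMem_of_mem_nbhd (hH : ∀ E ∈ H, #E = r) (he : #e = r - 1) (ha : a ∈ nbhd H e) :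
    a ∉ e := by
  intro hae
  have hpos : 0 < #e := card_pos.2 ⟨a, hae⟩
  have hr : #e = r := by simpa only [insert_eq_of_mem hae] using hH _ (mem_nbhd.1 ha)
  omega

theorem nbhd_subset_vnbhd (hH : ∀ E ∈ H, #E = r) (he : #e = r - 1) (hv : v ∈ e) :
    nbhd H e ⊆ vnbhd H v := by
  intro a ha
  have hav : a ≠ v := (ne_of_mem_of_not_mem hv (notMem_of_mem_nbhd hH he ha)).symm
  exact mem_vnbhd.2 ⟨hav, insert a e, mem_nbhd.1 ha, mem_insert_self a e, mem_insert_of_mem hv⟩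

theorem exists_edge_disjoint_of_card_lt_codegree (hH : ∀ E ∈ H, #E = r) {A : Finset V}
    (hdeg : ∀ f ∈ sshadow r H, #A < #(nbhd H f)) (hE : E ∈ H) :
    ∃ F ∈ H, E \ A ⊆ F ∧ Disjoint F A := by
  induction hk : #(E ∩ A) generalizing E with
  | zero =>
    exact ⟨E, hE, sdiff_subset, disjoint_iff_inter_eq_empty.2 (card_eq_zero.1 hk)⟩
  | succ k ih =>
    obtain ⟨x, hx⟩ : (E ∩ A).Nonempty := card_pos.1 (by omega)
    obtain ⟨hxE, hxA⟩ := mem_inter.1 hx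
    -- Exchanging `x` for a vertex `y` outside `A` shrinks the intersection with `A` by one.
    obtain ⟨y, hy, hyA⟩ : ∃ y ∈ nbhd H (E.erase x), y ∉ A :=
      exists_mem_notMem_of_card_lt_card (hdeg _ (erase_mem_sshadow hH hE hxE))
    have hcard : #(insert y (E.erase x) ∩ A) = k := by
      rw [insert_inter_of_notMem hyA, erase_inter, card_erase_of_mem hx, hk, Nat.add_sub_cancel]
    obtain ⟨F, hF, hsub, hdisj⟩ := ih (mem_nbhd.1 hy) hcard
    refine ⟨F, hF, fun z hz => hsub ?_, hdisj⟩
    obtain ⟨hzE, hzA⟩ := mem_sdiff.1 hz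
    have hzx : z ≠ x := (ne_of_mem_of_not_mem hxA hzA).symm
    exact mem_sdiff.2 ⟨mem_insert_of_mem (mem_erase.2 ⟨hzx, hzE⟩), hzA⟩

theorem IsTrFree.not_disjoint_of_mem_nbhd (hfree : IsTrFree r H) (hH : ∀ E ∈ H, #E = r)
    (he : #e = r - 1) (ha : a ∈ nbhd H e) (hb : b ∈ nbhd H e) (hab : a ≠ b)
    (hE : E ∈ H) (haE : a ∈ E) (hbE : b ∈ E) : ¬Disjoint E e := by
  intro hdisj
  have hbE' : b ∈ E.erase a := mem_erase.2 ⟨hab.symm, hbE⟩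
  refine hfree ⟨e, (E.erase a).erase b, a, b, he, ?_, hab, notMem_of_mem_nbhd hH he ha,
    notMem_of_mem_nbhd hH he hb, by simp, by simp, ?_, mem_nbhd.1 ha, mem_nbhd.1 hb, ?_⟩
  · rw [card_erase_of_mem hbE', card_erase_of_mem_edge hH hE haE, Nat.sub_sub]
  · exact hdisj.symm.mono_right ((erase_subset _ _).trans (erase_subset _ _))
  · rwa [insert_erase hbE', insert_erase haE]

theorem IsTrFree.isIndep_nbhd (hfree : IsTrFree r H) (hH : ∀ E ∈ H, #E = r)
    (hdeg : ∀ f ∈ sshadow r H, r - 1 < #(nbhd H f)) (he : #e = r - 1) :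
    IsIndep H (nbhd H e) := by
  intro E hE
  by_contra! hcard
  obtain ⟨a, ha, b, hb, hab⟩ := one_lt_card.1 hcard
  obtain ⟨haE, hae⟩ := mem_inter.1 ha
  obtain ⟨hbE, hbe⟩ := mem_inter.1 hb
  obtain ⟨F, hF, hsub, hdisj⟩ : ∃ F ∈ H, E \ e ⊆ F ∧ Disjoint F e :=
    exists_edge_disjoint_of_card_lt_codegree hH (by rwa [he]) hE
  have haF : a ∈ F := hsub (mem_sdiff.2 ⟨haE, notMem_of_mem_nbhd hH he hae⟩)
  have hbF : b ∈ F := hsub (mem_sdiff.2 ⟨hbE, notMem_of_mem_nbhd hH he hbe⟩)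
  exact hfree.not_disjoint_of_mem_nbhd hH he hae hbe hab hF haF hbF hdisj

theorem disjoint_nbhd_erase (hH : ∀ E ∈ H, #E = r)
    (hindep : ∀ e ∈ sshadow r H, IsIndep H (nbhd H e)) (hE : E ∈ H)
    (ha : a ∈ E) (hb : b ∈ E) (hab : a ≠ b) :
    Disjoint (nbhd H (E.erase a)) (nbhd H (E.erase b)) := by
  refine disjoint_left.2 fun w hwa hwb => ?_
  have hba : b ∈ E.erase a := mem_erase.2 ⟨hab.symm, hb⟩
  have hw : w = b :=
    card_le_one.1 (hindep _ (erase_mem_sshadow hH hE hb) _ (mem_nbhd.1 hwa))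
      w (mem_inter.2 ⟨mem_insert_self _ _, hwb⟩)
      b (mem_inter.2 ⟨mem_insert_of_mem hba, self_mem_nbhd_erase hE hb⟩)
  exact notMem_of_mem_nbhd hH (card_erase_of_mem_edge hH hE ha) hwa (hw ▸ hba)

theorem sum_card_nbhd_erase_le_card_vnbhd (hH : ∀ E ∈ H, #E = r)
    (hindep : ∀ e ∈ sshadow r H, IsIndep H (nbhd H e)) (hE : E ∈ H) (hv : v ∈ E) :
    ∑ u ∈ E.erase v, #(nbhd H (E.erase u)) ≤ #(vnbhd H v) := by
  have hdisj : (E.erase v : Set V).PairwiseDisjoint fun u => nbhd H (E.erase u) :=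
    fun _ ha _ hb hab =>
      disjoint_nbhd_erase hH hindep hE (mem_of_mem_erase ha) (mem_of_mem_erase hb) hab
  rw [← card_biUnion hdisj]
  refine card_le_card (biUnion_subset.2 fun u hu => ?_)
  obtain ⟨huv, huE⟩ := mem_erase.1 hu
  exact nbhd_subset_vnbhd hH (card_erase_of_mem_edge hH hE huE) (mem_erase.2 ⟨huv.symm, hv⟩)

theorem stmt7_general (hr : 2 ≤ r) {δ : ℝ} (hδ : (r : ℝ) - 1 ≤ δ) (hH : ∀ E ∈ H, #E = r)
    (hfree : IsTrFree r H) (hdeg : ∀ e ∈ sshadow r H, δ < (#(nbhd H e) : ℝ))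
    (hE : E ∈ H) (hv : v ∈ E) : ((r : ℝ) - 1) * δ < (#(vnbhd H v) : ℝ) := by
  have hcast : ((r - 1 : ℕ) : ℝ) = r - 1 := Nat.cast_pred (by omega)
  have hcodeg : ∀ e ∈ sshadow r H, r - 1 < #(nbhd H e) := fun e he => by
    exact_mod_cast (hcast.le.trans hδ).trans_lt (hdeg e he)
  have hindep : ∀ e ∈ sshadow r H, IsIndep H (nbhd H e) := fun e he =>
    hfree.isIndep_nbhd hH hcodeg (mem_sshadow.1 he).1
  have hcard : #(E.erase v) = r - 1 := card_erase_of_mem_edge hH hE hv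
  have hne : (E.erase v).Nonempty := card_pos.1 (by omega)
  calc ((r : ℝ) - 1) * δ = ∑ _u ∈ E.erase v, δ := by rw [sum_const, nsmul_eq_mul, hcard, hcast]
    _ < ∑ u ∈ E.erase v, (#(nbhd H (E.erase u)) : ℝ) :=
      sum_lt_sum_of_nonempty hne fun u hu =>
        hdeg _ (erase_mem_sshadow hH hE (mem_of_mem_erase hu))
    _ ≤ #(vnbhd H v) := by exact_mod_cast sum_card_nbhd_erase_le_card_vnbhd hH hindep hE hv

end

/-- For `r ≥ 3` and `n ≥ (r-1)(2r+1)/2`, in every `n`-vertex `T_r`-free `r`-graph with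
minimum positive codegree greater than `2n/(2r+1)`, every non-isolated vertex `v` satisfies
`|N_H(v)| > 2(r-1)n/(2r+1)`. -/
theorem stmt7 {V : Type*} [Fintype V] [DecidableEq V] {r n : ℕ} (hr : 3 ≤ r)
    (hn : ((r : ℝ) - 1) * (2 * r + 1) / 2 ≤ n) (hV : Fintype.card V = n)
    {H : Finset (Finset V)} (hH : ∀ E ∈ H, E.card = r)
    (hfree : IsTrFree r H)
    (hdeg : ∀ e ∈ sshadow r H, 2 * (n : ℝ) / (2 * r + 1) < ((nbhd H e).card : ℝ)) :
    ∀ v : V, (∃ E ∈ H, v ∈ E) →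
      2 * ((r : ℝ) - 1) * n / (2 * r + 1) < ((vnbhd H v).card : ℝ) := by
  rintro v ⟨E, hE, hv⟩
  have hδ : (r : ℝ) - 1 ≤ 2 * n / (2 * r + 1) := by
    rw [le_div_iff₀ (by positivity)]
    linarith
  convert stmt7_general (by omega) hδ hH hfree hdeg hE hv using 1
  ring
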